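/- arXiv:2009.10573 — 7 statements merged into one kernel-verified Lean document; each statement's English description precedes it below -/
import Mathlib

section
/- Suppose the parameters w, v, γ > 0 satisfy 2γ > w − v > 0 and v > 1. Then for every initial condition r₀ > 0 and φ₀ ∈ ℝ, the solution of the deterministic system r'(t) = −r(t)^w·cos²(φ(t)) + r(t)^v, φ'(t) = −r(t)^γ·cos²(φ(t)) blows up in finite time; precisely, there exists E ∈ (0, ∞) such that there exist NO differentiable functions r : [0, E] → (0, ∞) and φ : [0, E] → ℝ with r(0) = r₀, φ(0) = φ₀ and, for all t ∈ [0, E], r'(t) = −r(t)^w·cos²(φ(t)) + r(t)^v and φ'(t) = −r(t)^γ·cos²(φ(t)). -/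
/-!
Write `a = w - v`. If `cos φ₀ = 0`, then `φ` is constant, `r' = r ^ v`, and `r ^ (-(v - 1))` decreases
at the constant rate `v - 1`, so it would become negative in finite time.

Otherwise `cos φ` never vanishes (`cos_sq_bounds`), and `u = -tan φ` satisfies `u' = r ^ γ` and
`1 / cos² φ = 1 + u²`; the system becomes `r' = r ^ v (1 - r ^ a / (1 + u²))`, `u' = r ^ γ`. Let
`Y = κ (u - u(0) + 1)`, with `κ` so small that `Y² ≤ (1 + u²) / 2`, and compare `r` with the curve
`r = Y ^ (2 / a)`:

* below the curve, `r' ≥ r ^ v / 2`, a superlinear growth because `v > 1`;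
* above the curve, `Y' ≥ κ Y ^ (2 γ / a)`, a superlinear growth because `2 γ > a`.

With `δ = min (v - 1) (γ - a / 2) > 0` this says that the larger one of `p = r ^ (-δ)` and
`z = Y ^ (-2 δ / a)` always decreases at a rate at least `c > 0`. Hence (`barrier`) `p` stays below
a line of slope `-c`, which is impossible for a positive function beyond an explicit time.
-/

open Real Set
open scoped Topology

/-- If `t ↦ p t + c t` on `[0, t₀]` is maximal at `t₀`, then `p' (t₀) ≥ -c`. -/
lemma neg_le_deriv_of_left_max {p : ℝ → ℝ} {d c E t₀ : ℝ} (ht : 0 < t₀) (htE : t₀ ≤ E)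
    (hd : HasDerivWithinAt p d (Icc 0 E) t₀)
    (hmax : ∀ t ∈ Ico 0 t₀, p t + c * t ≤ p t₀ + c * t₀) : -c ≤ d := by
  have h1 : HasDerivWithinAt (fun t => p t + c * t) (d + c * 1) (Icc 0 E) t₀ :=
    hd.add ((hasDerivWithinAt_id t₀ _).const_mul c)
  have h2 := h1.mono (t := Icc 0 E) (s := Ico 0 t₀)
    (fun t ht' => ⟨ht'.1, ht'.2.le.trans htE⟩)
  rw [hasDerivWithinAt_iff_tendsto_slope' (by simp)] at h2
  have : (𝓝[Ico 0 t₀] t₀).NeBot := right_nhdsWithin_Ico_neBot ht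
  have h3 : 0 ≤ d + c * 1 := by
    refine ge_of_tendsto h2 ?_
    filter_upwards [self_mem_nhdsWithin] with t htt
    rw [slope_def_field]
    exact div_nonneg_of_nonpos (by linarith [hmax t htt]) (by linarith [htt.2])
  linarith

/-- If the larger one of `p` and `z` decreases faster than at rate `c` as long as it is at most `K`,
and both start below `K`, then `p` stays below the line `K - c t`. -/
lemma barrier {p z p' z' : ℝ → ℝ} {K c E : ℝ} (hE : 0 < E) (hc : 0 ≤ c)
    (hp : ∀ t ∈ Icc (0:ℝ) E, HasDerivWithinAt p (p' t) (Icc 0 E) t)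
    (hz : ∀ t ∈ Icc (0:ℝ) E, HasDerivWithinAt z (z' t) (Icc 0 E) t)
    (hp0 : p 0 < K) (hz0 : z 0 < K)
    (hpd : ∀ t ∈ Icc (0:ℝ) E, p t ≤ K → z t ≤ p t → p' t < -c)
    (hzd : ∀ t ∈ Icc (0:ℝ) E, z t ≤ K → p t ≤ z t → z' t < -c) :
    p E < K - c * E := by
  by_contra! hcon
  have cp : ContinuousOn p (Icc 0 E) := fun t ht => (hp t ht).continuousWithinAt
  have cz : ContinuousOn z (Icc 0 E) := fun t ht => (hz t ht).continuousWithinAt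
  have cm : ContinuousOn (fun t => max (p t) (z t) + c * t) (Icc 0 E) :=
    (ContinuousOn.sup cp cz).add (by fun_prop)
  have hclosed : IsClosed (Icc 0 E ∩ (fun t => max (p t) (z t) + c * t) ⁻¹' Ici K) :=
    cm.preimage_isClosed_of_isClosed isClosed_Icc isClosed_Ici
  have hcomp : IsCompact (Icc 0 E ∩ (fun t => max (p t) (z t) + c * t) ⁻¹' Ici K) :=
    isCompact_Icc.of_isClosed_subset hclosed inter_subset_left
  -- `t₀` is the first time at which `max p z` reaches the line `K - c t`.
  obtain ⟨t₀, ⟨ht₀, hK⟩, hmin⟩ := hcomp.exists_isLeast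
    ⟨E, ⟨hE.le, le_rfl⟩, by
      have := le_max_left (p E) (z E)
      simp only [mem_preimage, mem_Ici]; linarith⟩
  simp only [mem_preimage, mem_Ici] at hK
  have hpos : 0 < t₀ := by
    rcases ht₀.1.eq_or_lt with h | h
    · rw [← h] at hK
      have := max_lt hp0 hz0
      simp at hK
      rcases hK with hK | hK <;> linarith
    · exact h
  have hlt : ∀ t ∈ Ico 0 t₀, max (p t) (z t) + c * t < K := by
    intro t ht
    by_contra! h
    have := hmin ⟨⟨ht.1, ht.2.le.trans ht₀.2⟩, h⟩
    linarith [ht.2]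
  have hle : max (p t₀) (z t₀) + c * t₀ ≤ K := by
    have h2 := (cm t₀ ht₀).mono (s := Ico 0 t₀) (fun t ht' => ⟨ht'.1, ht'.2.le.trans ht₀.2⟩)
    have : (𝓝[Ico 0 t₀] t₀).NeBot := right_nhdsWithin_Ico_neBot hpos
    refine le_of_tendsto h2 ?_
    filter_upwards [self_mem_nhdsWithin] with t htt using (hlt t htt).le
  have hct : 0 ≤ c * t₀ := by positivity
  rcases le_total (z t₀) (p t₀) with h | h
  · rw [max_eq_left h] at hK hle
    have h1 := hpd t₀ ht₀ (by linarith) h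
    have h2 := neg_le_deriv_of_left_max (c := c) hpos ht₀.2 (hp t₀ ht₀)
      (fun t ht => by linarith [hlt t ht, le_max_left (p t) (z t)])
    linarith
  · rw [max_eq_right h] at hK hle
    have h1 := hzd t₀ ht₀ (by linarith) h
    have h2 := neg_le_deriv_of_left_max (c := c) hpos ht₀.2 (hz t₀ ht₀)
      (fun t ht => by linarith [hlt t ht, le_max_right (p t) (z t)])
    linarith

lemma monotoneOn_Icc_of_hasDerivWithinAt {f f' : ℝ → ℝ} {E : ℝ}
    (hf : ∀ t ∈ Icc (0:ℝ) E, HasDerivWithinAt f (f' t) (Icc 0 E) t)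
    (h0 : ∀ t ∈ Icc (0:ℝ) E, 0 ≤ f' t) : MonotoneOn f (Icc 0 E) :=
  monotoneOn_of_hasDerivWithinAt_nonneg (f' := f') (convex_Icc _ _)
    (fun t ht => (hf t ht).continuousWithinAt)
    (fun t ht => (hf t (interior_subset ht)).mono interior_subset)
    (fun t ht => h0 t (interior_subset ht))

/-- Along `φ' = -R(t) cos² φ` with `0 ≤ R ≤ M`, one has `|(cos² φ)'| ≤ 2 M cos² φ`, so `cos² φ` grows
and decays at most exponentially. -/
lemma cos_sq_bounds {φ R : ℝ → ℝ} {E M : ℝ}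
    (hR : ∀ t ∈ Icc (0:ℝ) E, 0 ≤ R t ∧ R t ≤ M)
    (hφ : ∀ t ∈ Icc (0:ℝ) E,
      HasDerivWithinAt φ (-R t * (Real.cos (φ t)) ^ 2) (Icc (0:ℝ) E) t)
    {t : ℝ} (ht : t ∈ Icc (0:ℝ) E) :
    Real.cos (φ 0) ^ 2 ≤ Real.cos (φ t) ^ 2 * Real.exp (2 * M * t) ∧
    Real.cos (φ t) ^ 2 * Real.exp (-(2 * M) * t) ≤ Real.cos (φ 0) ^ 2 := by
  have h0 : (0:ℝ) ∈ Icc (0:ℝ) E := ⟨le_rfl, ht.1.trans ht.2⟩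
  have hd : ∀ (k : ℝ), ∀ s ∈ Icc (0:ℝ) E,
      HasDerivWithinAt (fun s => Real.cos (φ s) ^ 2 * Real.exp (k * s))
        (Real.cos (φ s) ^ 2 * Real.exp (k * s) *
          (2 * R s * (Real.sin (φ s) * Real.cos (φ s)) + k)) (Icc 0 E) s := by
    intro k s hs
    have h1 := ((hφ s hs).cos.pow 2).mul ((hasDerivWithinAt_id s (Icc 0 E)).const_mul k).exp
    refine h1.congr_deriv ?_
    simp
    ring
  have hsc : ∀ x : ℝ, |Real.sin x * Real.cos x| ≤ 1 := by
    intro x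
    rw [abs_mul]
    exact mul_le_one₀ (Real.abs_sin_le_one x) (abs_nonneg _) (Real.abs_cos_le_one x)
  have hb : ∀ s ∈ Icc (0:ℝ) E, |2 * R s * (Real.sin (φ s) * Real.cos (φ s))| ≤ 2 * M := by
    intro s hs
    obtain ⟨hR0, hRM⟩ := hR s hs
    rw [abs_mul, abs_of_nonneg (by positivity : 0 ≤ 2 * R s)]
    have := hsc (φ s)
    nlinarith
  constructor
  · have := monotoneOn_Icc_of_hasDerivWithinAt (hd (2 * M)) (fun s hs => by
      have := (abs_le.1 (hb s hs)).1
      exact mul_nonneg (by positivity) (by linarith)) h0 ht ht.1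
    simpa using this
  · have := monotoneOn_Icc_of_hasDerivWithinAt (fun s hs => (hd (-(2 * M)) s hs).neg)
      (fun s hs => by
        have := (abs_le.1 (hb s hs)).2
        have h := mul_nonneg (by positivity : 0 ≤ Real.cos (φ s) ^ 2 * Real.exp (-(2 * M) * s))
          (by linarith : 0 ≤ -(2 * R s * (Real.sin (φ s) * Real.cos (φ s)) + -(2 * M)))
        linarith) h0 ht ht.1
    simpa using this

/-- Along a solution on `[0, E]`, `cos φ` vanishes either everywhere or nowhere. -/
lemma cos_eq_zero_iff_initial {r φ : ℝ → ℝ} {E γ : ℝ} (hr : ∀ t ∈ Icc (0:ℝ) E, 0 < r t)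
    (hcont : ContinuousOn r (Icc 0 E))
    (hφ : ∀ t ∈ Icc (0:ℝ) E,
      HasDerivWithinAt φ (-(r t) ^ γ * (Real.cos (φ t)) ^ 2) (Icc (0:ℝ) E) t)
    {t : ℝ} (ht : t ∈ Icc (0:ℝ) E) : Real.cos (φ t) = 0 ↔ Real.cos (φ 0) = 0 := by
  have hc : ContinuousOn (fun t => r t ^ γ) (Icc 0 E) :=
    hcont.rpow_const (fun t ht => Or.inl (hr t ht).ne')
  obtain ⟨M, hM⟩ := isCompact_Icc.bddAbove_image hc
  obtain ⟨h1, h2⟩ := cos_sq_bounds (R := fun t => r t ^ γ) (M := M)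
    (fun t ht => ⟨(rpow_pos_of_pos (hr t ht) _).le, hM ⟨t, ht, rfl⟩⟩) hφ ht
  constructor
  · intro h
    rw [h] at h1
    simp only [ne_eq, OfNat.ofNat_ne_zero, not_false_eq_true, zero_pow, zero_mul] at h1
    exact pow_eq_zero_iff two_ne_zero |>.1 (le_antisymm h1 (sq_nonneg _))
  · intro h
    rw [h] at h2
    simp only [ne_eq, OfNat.ofNat_ne_zero, not_false_eq_true, zero_pow] at h2
    have h3 : Real.cos (φ t) ^ 2 ≤ 0 := by
      by_contra! h4
      have := mul_pos h4 (Real.exp_pos (-(2 * M) * t))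
      linarith
    exact pow_eq_zero_iff two_ne_zero |>.1 (le_antisymm h3 (sq_nonneg _))

/-- Comparing negative powers `-δ d`, `-δ b` of `x`, `y` is the same as comparing `y ^ b` with `x ^ d`
in the opposite order. The conclusion is raised to a power `k ≥ 0`, which is how it is used. -/
lemma rpow_le_of_neg_rpow_le {x y δ b k : ℝ} (hx : 0 < x) (hy : 0 < y) (hδ : 0 < δ) (hk : 0 ≤ k)
    {d : ℝ} (h : x ^ (-δ * d) ≤ y ^ (-δ * b)) : y ^ (b * k) ≤ x ^ (d * k) := by
  have := rpow_le_rpow_of_nonpos (z := -k / δ) (rpow_pos_of_pos hx _) h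
    (div_nonpos_of_nonpos_of_nonneg (by linarith) hδ.le)
  rw [← rpow_mul hx.le, ← rpow_mul hy.le] at this
  convert this using 2 <;> field_simp

/-- In the parameter regime `2γ > w - v > 0`, `v > 1` (and `w, v, γ > 0`),
every solution of the deterministic system
`r' = -r^w cos²(φ) + r^v`, `φ' = -r^γ cos²(φ)`
with initial radius `r₀ > 0` blows up in finite time: there is a finite time `E > 0` such that
no solution (with positive radius) exists on the whole interval `[0, E]`. -/
theorem stmt0 (w v γ : ℝ) (hw : 0 < w) (hv : 0 < v) (hγ : 0 < γ)
    (h1 : 2 * γ > w - v) (h2 : w - v > 0) (h3 : v > 1)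
    (r₀ φ₀ : ℝ) (hr₀ : 0 < r₀) :
    ∃ E : ℝ, 0 < E ∧
      ¬ ∃ r φ : ℝ → ℝ,
        (∀ t ∈ Icc (0:ℝ) E, 0 < r t) ∧
        r 0 = r₀ ∧ φ 0 = φ₀ ∧
        (∀ t ∈ Icc (0:ℝ) E,
          HasDerivWithinAt r (-(r t) ^ w * (Real.cos (φ t)) ^ 2 + (r t) ^ v) (Icc (0:ℝ) E) t ∧
          HasDerivWithinAt φ (-(r t) ^ γ * (Real.cos (φ t)) ^ 2) (Icc (0:ℝ) E) t) := by
  by_cases hcos : Real.cos φ₀ = 0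
  · -- `r ^ (-(v - 1))` has derivative `-(v - 1)`, so it is negative at time `E`.
    set K : ℝ := r₀ ^ (-(v - 1)) + 1 with hK
    have hKpos : 0 < K := by positivity
    have hv1 : 0 < v - 1 := by linarith
    have hE : 0 < K / ((v - 1) / 2) := by positivity
    refine ⟨K / ((v - 1) / 2), hE, ?_⟩
    rintro ⟨r, φ, hr, hr0, hφ0, hode⟩
    have hcos' : ∀ t ∈ Icc (0:ℝ) (K / ((v - 1) / 2)), Real.cos (φ t) = 0 := fun t ht =>
      (cos_eq_zero_iff_initial hr (fun t ht => (hode t ht).1.continuousWithinAt)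
        (fun t ht => (hode t ht).2) ht).2 (by rw [hφ0]; exact hcos)
    have hp : ∀ t ∈ Icc (0:ℝ) (K / ((v - 1) / 2)), HasDerivWithinAt
        (fun t => r t ^ (-(v - 1))) (-(v - 1)) (Icc (0:ℝ) (K / ((v - 1) / 2))) t := by
      intro t ht
      refine ((hode t ht).1.rpow_const (p := -(v - 1)) (Or.inl (hr t ht).ne')).congr_deriv ?_
      have : r t ^ v * r t ^ (-(v - 1) - 1) = 1 := by
        rw [← rpow_add (hr t ht)]; ring_nf; simp
      rw [hcos' t ht]
      linear_combination (-(v - 1)) * this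
    have h0 : r 0 ^ (-(v - 1)) < K := by rw [hr0, hK]; linarith
    have := barrier (c := (v - 1) / 2) hE (by positivity) hp hp h0 h0
      (fun t _ _ _ => by linarith) (fun t _ _ _ => by linarith)
    rw [mul_div_cancel₀ _ (by positivity : (v - 1) / 2 ≠ 0)] at this
    have h4 := rpow_pos_of_pos (hr _ ⟨hE.le, le_rfl⟩) (-(v - 1))
    linarith
  · obtain ⟨a, ha⟩ : ∃ a, a = w - v := ⟨_, rfl⟩
    have hapos : 0 < a := by linarith
    obtain ⟨δ, hδ⟩ : ∃ δ, δ = min (v - 1) (γ - a / 2) := ⟨_, rfl⟩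
    have hδpos : 0 < δ := by rw [hδ]; exact lt_min (by linarith) (by linarith)
    have hδv : δ ≤ v - 1 := by rw [hδ]; exact min_le_left _ _
    have hδγ : δ ≤ γ - a / 2 := by rw [hδ]; exact min_le_right _ _
    obtain ⟨T, hT⟩ : ∃ T, T = Real.tan φ₀ := ⟨_, rfl⟩
    -- This `κ` gives `(κ (T + u + 1))² ≤ (1 + u²) / 2` for every real `u`.
    obtain ⟨κ, hκ⟩ : ∃ κ, κ = 1 / (2 * (1 + |T + 1|)) := ⟨_, rfl⟩
    have hκpos : 0 < κ := by rw [hκ]; positivity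
    have hκu : ∀ u : ℝ, (κ * (T + u + 1)) ^ 2 ≤ (1 + u ^ 2) / 2 := by
      intro u
      have e : κ * (2 * (1 + |T + 1|)) = 1 := by rw [hκ]; field_simp
      have e1 : |T + u + 1| ≤ |T + 1| + |u| := by
        rw [show T + u + 1 = (T + 1) + u by ring]; exact abs_add_le _ _
      have e2 : κ * |T + u + 1| ≤ (1 + |u|) / 2 := by
        have := mul_le_mul_of_nonneg_left e1 hκpos.le
        have e3 : 0 ≤ κ * (|T + 1| * |u|) := by positivity
        have e5 : (1 + |u|) / 2 = κ * (1 + |T + 1|) * (1 + |u|) := by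
          linear_combination (-(1 + |u|) / 2) * e
        rw [e5]
        linarith
      have e4 : (κ * |T + u + 1|) ^ 2 ≤ ((1 + |u|) / 2) ^ 2 :=
        pow_le_pow_left₀ (by positivity) e2 2
      rw [mul_pow, sq_abs, ← mul_pow] at e4
      nlinarith [sq_nonneg (1 - |u|), sq_abs u]
    obtain ⟨b, hb⟩ : ∃ b, b = 2 / a := ⟨_, rfl⟩
    have hba : b * a = 2 := by rw [hb]; field_simp
    have hbpos : 0 < b := by rw [hb]; positivity
    obtain ⟨K, hK⟩ : ∃ K, K = max (r₀ ^ (-δ * 1)) (κ ^ (-δ * b)) + 1 := ⟨_, rfl⟩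
    have hKr : r₀ ^ (-δ * 1) < K := by
      rw [hK]; linarith [le_max_left (r₀ ^ (-δ * 1)) (κ ^ (-δ * b))]
    have hKκ : κ ^ (-δ * b) < K := by
      rw [hK]; linarith [le_max_right (r₀ ^ (-δ * 1)) (κ ^ (-δ * b))]
    have hKpos : 0 < K := (rpow_pos_of_pos hr₀ _).trans hKr
    have hKδ : K = (K ^ (-1 / δ)) ^ (-δ * 1) := by
      rw [← rpow_mul hKpos.le]
      rw [show -1 / δ * (-δ * 1) = 1 by field_simp, rpow_one]
    -- Rates of decrease of `p` below the curve and of `z` above it.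
    obtain ⟨c₁, hc₁⟩ : ∃ c₁, c₁ = δ / 2 * (K ^ (-1 / δ)) ^ (1 * (v - 1 - δ)) := ⟨_, rfl⟩
    obtain ⟨c₂, hc₂⟩ : ∃ c₂, c₂ = κ * (δ * b) * κ ^ (b * γ - δ * b - 1) := ⟨_, rfl⟩
    have hc₁pos : 0 < c₁ := by rw [hc₁]; positivity
    have hc₂pos : 0 < c₂ := by rw [hc₂]; positivity
    obtain ⟨c, hc⟩ : ∃ c, c = min c₁ c₂ / 2 := ⟨_, rfl⟩
    have hmin : 0 < min c₁ c₂ := lt_min hc₁pos hc₂pos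
    have hcpos : 0 < c := by rw [hc]; positivity
    have hcc₁ : c < c₁ := by rw [hc]; linarith [min_le_left c₁ c₂]
    have hcc₂ : c < c₂ := by rw [hc]; linarith [min_le_right c₁ c₂]
    have hEpos : 0 < K / c := by positivity
    obtain ⟨E, hE⟩ : ∃ E, E = K / c := ⟨_, rfl⟩
    rw [← hE] at hEpos
    refine ⟨E, hEpos, ?_⟩
    rintro ⟨r, φ, hr, hr0, hφ0, hode⟩
    have h0 : (0:ℝ) ∈ Icc (0:ℝ) E := ⟨le_rfl, hEpos.le⟩
    have hcos' : ∀ t ∈ Icc (0:ℝ) E, Real.cos (φ t) ≠ 0 := fun t ht =>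
      (cos_eq_zero_iff_initial hr (fun t ht => (hode t ht).1.continuousWithinAt)
        (fun t ht => (hode t ht).2) ht).not.2 (by rw [hφ0]; exact hcos)
    have hY : ∀ t ∈ Icc (0:ℝ) E, HasDerivWithinAt (fun t => κ * (T + -Real.tan (φ t) + 1))
        (κ * r t ^ γ) (Icc 0 E) t := by
      intro t ht
      have hne := hcos' t ht
      have := (((Real.hasDerivAt_tan hne).comp_hasDerivWithinAt t (hode t ht).2).neg.const_add
        T).add_const 1 |>.const_mul κ
      refine this.congr_deriv ?_
      field_simp
    have hYκ : ∀ t ∈ Icc (0:ℝ) E, κ ≤ κ * (T + -Real.tan (φ t) + 1) := by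
      intro t ht
      have := monotoneOn_Icc_of_hasDerivWithinAt hY (fun t ht =>
        mul_nonneg hκpos.le (rpow_pos_of_pos (hr t ht) _).le) h0 ht ht.1
      simp only [hφ0, ← hT] at this
      linarith
    have hmain := barrier (p := fun t => r t ^ (-δ * 1))
      (z := fun t => (κ * (T + -Real.tan (φ t) + 1)) ^ (-δ * b)) (K := K) (c := c) hEpos hcpos.le
      (fun t ht => (hode t ht).1.rpow_const (Or.inl (hr t ht).ne'))
      (fun t ht => (hY t ht).rpow_const (Or.inl (hκpos.trans_le (hYκ t ht)).ne'))
      (by simpa only [hr0] using hKr)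
      (by simpa only [hφ0, ← hT, add_neg_cancel, zero_add, mul_one] using hKκ)
      (by
        intro t ht hpK hzp
        have hrt := hr t ht
        have hYpos := hκpos.trans_le (hYκ t ht)
        -- below the curve, `r ^ a cos² φ ≤ 1 / 2`
        have hra : r t ^ a * Real.cos (φ t) ^ 2 ≤ 1 / 2 := by
          have e := rpow_le_of_neg_rpow_le hYpos hrt hδpos hapos.le hzp
          rw [hba, one_mul, rpow_two] at e
          have e2 := e.trans (hκu _)
          rw [neg_sq] at e2
          have e3 := Real.inv_one_add_tan_sq (hcos' t ht)
          rw [← e3, ← div_eq_mul_inv, div_le_iff₀ (by positivity)]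
          linarith
        have hrK : (K ^ (-1 / δ)) ^ (1 * (v - 1 - δ)) ≤ r t ^ (1 * (v - 1 - δ)) := by
          refine rpow_le_of_neg_rpow_le (d := 1) hrt (by positivity) hδpos (by linarith) ?_
          rw [← hKδ]; exact hpK
        have e1 : r t ^ w = r t ^ v * r t ^ a := by rw [← rpow_add hrt, ha]; ring_nf
        have e2 : r t ^ (1 * (v - 1 - δ)) = r t ^ v * r t ^ (-δ * 1 - 1) := by
          rw [← rpow_add hrt]; ring_nf
        have e3 : (-r t ^ w * Real.cos (φ t) ^ 2 + r t ^ v) * (-δ * 1) * r t ^ (-δ * 1 - 1)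
            = -(δ * (1 - r t ^ a * Real.cos (φ t) ^ 2) * r t ^ (1 * (v - 1 - δ))) := by
          rw [e1, e2]; ring
        rw [e3]
        have e4 : δ / 2 ≤ δ * (1 - r t ^ a * Real.cos (φ t) ^ 2) := by nlinarith
        have e5 : c₁ ≤ δ * (1 - r t ^ a * Real.cos (φ t) ^ 2) * r t ^ (1 * (v - 1 - δ)) := by
          rw [hc₁]
          exact mul_le_mul e4 hrK (by positivity) (by linarith)
        linarith)
      (by
        intro t ht hzK hpz
        have hrt := hr t ht
        have hYk := hYκ t ht
        have hYpos := hκpos.trans_le hYk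
        have e := rpow_le_of_neg_rpow_le hrt hYpos hδpos hγ.le hpz
        rw [one_mul] at e
        generalize κ * (T + -Real.tan (φ t) + 1) = Y at *
        have hexp : 0 ≤ b * γ - δ * b - 1 := by
          have := mul_le_mul_of_nonneg_left hδγ hbpos.le
          linarith
        have e1 : κ ^ (b * γ - δ * b - 1) ≤ Y ^ (b * γ - δ * b - 1) :=
          rpow_le_rpow hκpos.le hYk hexp
        have e2 : Y ^ (b * γ - δ * b - 1) = Y ^ (b * γ) * Y ^ (-δ * b - 1) := by
          rw [← rpow_add hYpos]; ring_nf
        have e3 : Y ^ (b * γ) * Y ^ (-δ * b - 1) ≤ r t ^ γ * Y ^ (-δ * b - 1) :=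
          mul_le_mul_of_nonneg_right e (rpow_pos_of_pos hYpos _).le
        have e4 : c₂ ≤ κ * (δ * b) * (r t ^ γ * Y ^ (-δ * b - 1)) := by
          rw [hc₂]
          exact mul_le_mul_of_nonneg_left (by linarith) (by positivity)
        linarith)
    rw [hE, mul_div_cancel₀ _ hcpos.ne', ← hE] at hmain
    have h4 := rpow_pos_of_pos (hr E ⟨hEpos.le, le_rfl⟩) (-δ * 1)
    linarith
end

section
/- Let w > v > 0 and γ > 0. For k ∈ ℕ set R_k := 2^k and let Φ_k be the unique number in (π/2, π] with R_k^{w−v}·cos²(Φ_k) = 1/2, and define B_k := [R_k, ∞) × [π/2, Φ_k]. Then B_k is invariant for the deterministic system: if r : [T₀, T₁] → (0, ∞) and φ : [T₀, T₁] → ℝ are differentiable with r'(t) = −r(t)^w·cos²(φ(t)) + r(t)^v and φ'(t) = −r(t)^γ·cos²(φ(t)) for all t ∈ [T₀, T₁], and (r(T₀), φ(T₀)) ∈ B_k, then (r(t), φ(t)) ∈ B_k for all t ∈ [T₀, T₁]. -/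
open Real Set

/-!
Each of the three sides of the region is handled by its own argument.

* The upper angle: `φ' ≤ 0`, so `φ` never exceeds its initial value.
* The lower angle `π/2` is an equilibrium of the angular equation. As `r ^ γ ≤ M` on the compact
  time interval and `cos² φ ≤ |φ - π/2|`, the function `π/2 - φ` cannot cross the barrier
  `ε e^((M+1)(t-T₀))` for any `ε > 0`, and `ε → 0` gives `φ ≥ π/2`.
* The radius: with `R = 2^k`, where `r = R` the angular bounds give
  `r^(w-v) cos² φ ≤ R^(w-v) cos² Φ = 1/2`, so `r' = r^v (1 - r^(w-v) cos² φ) > 0` and `r` cannot fall below `R`.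

The last two arguments are instances of `image_le_of_deriv_right_lt_deriv_boundary`.
-/

/-- A solution of the angular equation, with any coefficient `g` bounded above, cannot
cross the equilibrium `π/2` downwards. -/
lemma pi_div_two_le_of_deriv {a b M : ℝ} {φ g : ℝ → ℝ} (hM : 0 ≤ M)
    (hgM : ∀ t ∈ Icc a b, g t ≤ M)
    (hφ : ∀ t ∈ Icc a b, HasDerivWithinAt φ (-g t * cos (φ t) ^ 2) (Icc a b) t)
    (ha : π / 2 ≤ φ a) : ∀ t ∈ Icc a b, π / 2 ≤ φ t := by
  intro t ht
  have key : ∀ ε > 0, π / 2 - φ t ≤ ε * exp ((M + 1) * (t - a)) := by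
    intro ε hε
    refine image_le_of_deriv_right_lt_deriv_boundary (a := a) (b := b)
      (f := fun s => π / 2 - φ s) (f' := fun s => g s * cos (φ s) ^ 2)
      (B := fun s => ε * exp ((M + 1) * (s - a)))
      (B' := fun s => ε * (exp ((M + 1) * (s - a)) * (M + 1))) ?_ ?_ ?_ ?_ ?_ ht
    · exact continuousOn_const.sub fun s hs => (hφ s hs).continuousWithinAt
    · intro s hs
      have h := ((hφ s (Ico_subset_Icc_self hs)).mono_of_mem_nhdsWithin
        (Icc_mem_nhdsGE_of_mem hs)).const_sub (π / 2)
      exact h.congr_deriv (by ring)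
    · have : 0 < ε * exp ((M + 1) * (a - a)) := by positivity
      change π / 2 - φ a ≤ ε * exp ((M + 1) * (a - a))
      linarith
    · intro s
      have h : HasDerivAt (fun s : ℝ => (M + 1) * (s - a)) (M + 1) s := by
        simpa using ((hasDerivAt_id s).sub_const a).const_mul (M + 1)
      exact h.exp.const_mul ε
    · intro s hs heq
      have hs' := Ico_subset_Icc_self hs
      change π / 2 - φ s = ε * exp ((M + 1) * (s - a)) at heq
      have hpos : 0 < ε * exp ((M + 1) * (s - a)) := by positivity
      set y := ε * exp ((M + 1) * (s - a)) with hy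
      have hcos : cos (φ s) ^ 2 ≤ y := by
        -- On the barrier `cos² φ = sin² y ≤ |sin y| ≤ y`.
        rw [← sin_pi_div_two_sub, heq]
        have h4 : |sin y| ≤ |y| := abs_sin_le_abs
        rw [abs_of_pos hpos] at h4
        rw [← sq_abs]
        nlinarith [abs_nonneg (sin y), abs_sin_le_one y]
      calc g s * cos (φ s) ^ 2 ≤ M * y :=
            mul_le_mul (hgM s hs') hcos (sq_nonneg _) hM
        _ < y * (M + 1) := by linarith
        _ = ε * (exp ((M + 1) * (s - a)) * (M + 1)) := by rw [hy]; ring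
  -- This `ε` makes the bound at `t` equal to half of `π/2 - φ t`.
  by_contra! hlt
  have hE : 0 < exp ((M + 1) * (t - a)) := exp_pos _
  have h := key ((π / 2 - φ t) / (2 * exp ((M + 1) * (t - a))))
    (div_pos (by linarith) (by positivity))
  have h2 : (π / 2 - φ t) / (2 * exp ((M + 1) * (t - a))) * exp ((M + 1) * (t - a))
      = (π / 2 - φ t) / 2 := by field_simp
  linarith

/-- For `w > v > 0`, `γ > 0`, `R_k = 2^k` and `Φ_k` the unique number in
`(π/2, π]` with `R_k^(w-v) cos²(Φ_k) = 1/2`, the set `B_k = [R_k, ∞) × [π/2, Φ_k]` is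
invariant for the deterministic system. -/
theorem stmt1 (w v γ : ℝ) (hwv : w > v) (hv : 0 < v) (hγ : 0 < γ)
    (k : ℕ) (Φ : ℝ) (hΦ : Φ ∈ Set.Ioc (π/2) π)
    (hΦeq : ((2:ℝ)^k) ^ (w - v) * (Real.cos Φ) ^ 2 = 1/2)
    (T₀ T₁ : ℝ) (hT : T₀ ≤ T₁)
    (r φ : ℝ → ℝ)
    (hrpos : ∀ t ∈ Set.Icc T₀ T₁, 0 < r t)
    (hr : ∀ t ∈ Set.Icc T₀ T₁,
      HasDerivWithinAt r (-(r t) ^ w * (Real.cos (φ t)) ^ 2 + (r t) ^ v) (Set.Icc T₀ T₁) t)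
    (hφ : ∀ t ∈ Set.Icc T₀ T₁,
      HasDerivWithinAt φ (-(r t) ^ γ * (Real.cos (φ t)) ^ 2) (Set.Icc T₀ T₁) t)
    (hinit : (2:ℝ)^k ≤ r T₀ ∧ φ T₀ ∈ Set.Icc (π/2) Φ) :
    ∀ t ∈ Set.Icc T₀ T₁, (2:ℝ)^k ≤ r t ∧ φ t ∈ Set.Icc (π/2) Φ := by
  have hrc : ContinuousOn r (Icc T₀ T₁) := fun t ht => (hr t ht).continuousWithinAt
  have hφc : ContinuousOn φ (Icc T₀ T₁) := fun t ht => (hφ t ht).continuousWithinAt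
  have hupper : ∀ t ∈ Icc T₀ T₁, φ t ≤ Φ := by
    have hanti : AntitoneOn φ (Icc T₀ T₁) := by
      refine antitoneOn_of_hasDerivWithinAt_nonpos (convex_Icc _ _) hφc
        (fun t ht => (hφ t (interior_subset ht)).mono interior_subset) fun t ht => ?_
      have h := rpow_pos_of_pos (hrpos t (interior_subset ht)) γ
      nlinarith [mul_nonneg h.le (sq_nonneg (cos (φ t)))]
    intro t ht
    exact (hanti (left_mem_Icc.2 hT) ht ht.1).trans hinit.2.2
  have hlower : ∀ t ∈ Icc T₀ T₁, π / 2 ≤ φ t := by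
    obtain ⟨M, hM⟩ := isCompact_Icc.exists_bound_of_continuousOn
      (hrc.rpow_const fun t _ => Or.inr hγ.le)
    exact pi_div_two_le_of_deriv (g := fun t => r t ^ γ)
      ((norm_nonneg _).trans (hM T₀ (left_mem_Icc.2 hT)))
      (fun t ht => (le_abs_self _).trans (hM t ht)) hφ hinit.2.1
  have hcos : ∀ t ∈ Icc T₀ T₁, cos (φ t) ^ 2 ≤ cos Φ ^ 2 := by
    intro t ht
    have h1 : cos Φ ≤ cos (φ t) :=
      cos_le_cos_of_nonneg_of_le_pi (by linarith [hlower t ht, pi_pos]) hΦ.2 (hupper t ht)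
    have h2 : cos (φ t) ≤ 0 := cos_nonpos_of_pi_div_two_le_of_le (hlower t ht)
      (by linarith [hupper t ht, hΦ.2, pi_pos])
    nlinarith
  intro t ht
  refine ⟨?_, hlower t ht, hupper t ht⟩
  have hR : (0 : ℝ) < 2 ^ k := by positivity
  have hle : -r t ≤ -(2 : ℝ) ^ k := by
    refine image_le_of_deriv_right_lt_deriv_boundary (a := T₀) (b := T₁)
      (f := fun s => -r s) (f' := fun s => -(-(r s) ^ w * cos (φ s) ^ 2 + r s ^ v))
      (B := fun _ => -(2 : ℝ) ^ k) (B' := fun _ => 0) hrc.neg ?_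
      (neg_le_neg hinit.1) (fun s => hasDerivAt_const s _) ?_ ht
    · intro s hs
      exact ((hr s (Ico_subset_Icc_self hs)).mono_of_mem_nhdsWithin
        (Icc_mem_nhdsGE_of_mem hs)).neg
    · intro s hs heq
      have hrs : r s = 2 ^ k := neg_injective heq
      have hsplit : ((2 : ℝ) ^ k) ^ w = ((2 : ℝ) ^ k) ^ v * ((2 : ℝ) ^ k) ^ (w - v) := by
        rw [← rpow_add hR]; congr 1; ring
      have hvpos := rpow_pos_of_pos hR v
      have hbound : ((2 : ℝ) ^ k) ^ (w - v) * cos (φ s) ^ 2 ≤ 1 / 2 := by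
        rw [← hΦeq]
        exact mul_le_mul_of_nonneg_left (hcos s (Ico_subset_Icc_self hs))
          (rpow_pos_of_pos hR _).le
      simp only [hrs, hsplit]
      nlinarith [mul_le_mul_of_nonneg_left hbound hvpos.le]
  linarith
end

section
/- Define A(φ) := φ/2 + sin(2φ)/4. For each k₀ > 0 there exists a constant C > 0 such that for all K ≥ k₀: ∫₀^π ∫_β^∞ e^{−K(A(z) − A(β))} dz dβ ≤ C·K^{−2/3}. -/
/-!
Write `t = z - β` and `u = β - π / 2`. With `v = u + t / 2`, the addition formulas give
`2 (A z - A β) = t - sin t * cos (2 v) = (t - sin t) + 2 sin t * sin² v`, and from this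
`A z - A β ≥ c t (min 1 t² + u²)` (`A_sub_lower`): the first summand is of order `t³`, the second
of order `t v²`, and `t² + v²` controls `t² + u²`.

Put `a = K ^ (1/3)`. The elementary inequality `x³ ≥ x - 1` at `x = a t` linearizes the cubic term:
`K (A z - A β) ≥ δ (a + a³ u²) t - 1`, with `δ` depending only on a positive lower bound for `a`.
The inner integral is therefore at most `e / (δ a (1 + (a u)²))`, and integrating in `u` produces
an arctangent and another factor `1 / a`, hence a bound by a multiple of `a⁻² = K ^ (-2/3)`.
-/

open Real Set MeasureTheory

/-- `A(φ) = φ/2 + sin(2φ)/4 = ∫₀^φ cos²`. -/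
noncomputable def A (φ : ℝ) : ℝ := φ / 2 + Real.sin (2 * φ) / 4

lemma sin_le_sub_cube {t : ℝ} (h0 : 0 ≤ t) (h2 : t ≤ 2) : Real.sin t ≤ t - t ^ 3 / 36 := by
  -- The Taylor bound `Real.sin_bound` is only available on `[-1, 1]`, so it is applied at `t / 2`.
  have hb := Real.sin_bound (x := t / 2) (by rw [abs_le]; constructor <;> linarith)
  rw [abs_of_nonneg (by linarith : 0 ≤ t / 2)] at hb
  have hb := (abs_le.1 hb).2
  have hs : 0 ≤ Real.sin (t / 2) :=
    Real.sin_nonneg_of_nonneg_of_le_pi (by linarith) (by linarith [Real.pi_gt_three])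
  have hd : Real.sin t = 2 * Real.sin (t / 2) * Real.cos (t / 2) := by
    rw [← Real.sin_two_mul]; ring_nf
  have hc := Real.cos_le_one (t / 2)
  have h3 : 0 ≤ t ^ 3 := by positivity
  have h4 : t ^ 4 ≤ 2 * t ^ 3 := by nlinarith
  have : Real.sin t ≤ 2 * Real.sin (t / 2) := by rw [hd]; nlinarith
  nlinarith

/-- The sine stays comparable to its argument up to `3π/4`, beyond the range of Jordan's
inequality; the constant `1/7` is a lower bound for `1/(2π)`. -/
lemma sq_div_le_sin_sq {v : ℝ} (hv : |v| ≤ 3 * π / 4) : v ^ 2 / 49 ≤ Real.sin v ^ 2 := by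
  have hp := Real.pi_pos
  have hp4 := Real.pi_lt_d2
  rw [← sq_abs v, ← sq_abs (Real.sin v)]
  have key : |v| / 7 ≤ Real.sin |v| := by
    have h0 := abs_nonneg v
    set s := |v|
    have h1 := Real.mul_le_sin (x := s / 2) (by linarith) (by linarith)
    have h2 := Real.one_sub_mul_le_cos (x := s / 2) (by linarith) (by linarith)
    have h3 : 2 / π * (s / 2) ≤ 3 / 4 := by
      rw [div_mul_eq_mul_div, div_le_iff₀ hp]; linarith
    have h4 : 2 / 7 * s ≤ 2 / π * (s / 2) * 2 := by
      have : (2 : ℝ) / 7 ≤ 2 / π := by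
        apply div_le_div_of_nonneg_left <;> linarith
      nlinarith
    have hd : Real.sin s = 2 * Real.sin (s / 2) * Real.cos (s / 2) := by
      rw [← Real.sin_two_mul]; ring_nf
    have h5 : 1 / 4 ≤ Real.cos (s / 2) := by linarith
    have h6 : s / 7 ≤ Real.sin (s / 2) := by linarith
    have h7 : 2 / 7 * s ≤ 2 * Real.sin (s / 2) := by linarith
    rw [hd]
    nlinarith
  have h8 : Real.sin |v| ≤ |Real.sin v| := by
    rcases abs_choice v with h | h <;> rw [h]
    · exact le_abs_self _
    · rw [Real.sin_neg]; exact neg_le_abs _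
  have := abs_nonneg v
  nlinarith

lemma A_sub_lower {u t : ℝ} (hu : |u| ≤ π / 2) (ht : 0 ≤ t) :
    t / 196 * (min 1 (t ^ 2) + u ^ 2) ≤ A (u + π / 2 + t) - A (u + π / 2) := by
  have hp := Real.pi_gt_three
  have hp4 := Real.pi_lt_d2
  obtain ⟨hu1, hu2⟩ := abs_le.1 hu
  have hD : A (u + π / 2 + t) - A (u + π / 2)
      = (t - Real.sin t * Real.cos (2 * (u + t / 2))) / 2 := by
    unfold A
    have e1 : Real.sin (2 * (u + π / 2 + t)) = - Real.sin (2 * (u + t / 2) + t) := by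
      rw [← Real.sin_add_pi]; ring_nf
    have e2 : Real.sin (2 * (u + π / 2)) = - Real.sin (2 * (u + t / 2) - t) := by
      rw [← Real.sin_add_pi]; ring_nf
    rw [e1, e2, Real.sin_add, Real.sin_sub]; ring
  rw [hD]
  rcases le_total t (3 / 2) with h | h
  · have h1 := sin_le_sub_cube ht (by linarith)
    have h2 : t / 2 ≤ Real.sin t := by
      have := Real.mul_le_sin ht (by linarith)
      have h' : (1 : ℝ) / 2 ≤ 2 / π := by
        rw [le_div_iff₀ (by linarith)]; linarith
      nlinarith
    have h3 := sq_div_le_sin_sq (v := u + t / 2) (by rw [abs_le]; constructor <;> linarith)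
    have h4 : Real.cos (2 * (u + t / 2)) = 1 - 2 * Real.sin (u + t / 2) ^ 2 := by
      rw [Real.cos_two_mul, Real.cos_sq']; ring
    rw [h4]
    have h5 : t / 2 * ((u + t / 2) ^ 2 / 49) ≤ Real.sin t * Real.sin (u + t / 2) ^ 2 := by
      apply mul_le_mul h2 h3 (by positivity) (by linarith)
    have h6 : t / 196 * (min 1 (t ^ 2) + u ^ 2) ≤ t / 196 * (t ^ 2 + u ^ 2) := by
      gcongr; exact min_le_right _ _
    have h7 : 0 ≤ t * (u + t) ^ 2 := by positivity
    have h8 : 0 ≤ t * t ^ 2 := by positivity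
    nlinarith
  · have h1 : Real.sin t * Real.cos (2 * (u + t / 2)) ≤ 1 := by
      have := Real.abs_sin_le_one t
      have h' := Real.abs_cos_le_one (2 * (u + t / 2))
      calc _ ≤ |Real.sin t * Real.cos (2 * (u + t / 2))| := le_abs_self _
        _ ≤ 1 := by rw [abs_mul]; exact mul_le_one₀ this (abs_nonneg _) h'
    have h2 : min 1 (t ^ 2) + u ^ 2 ≤ 4 := by
      have := min_le_left 1 (t ^ 2)
      nlinarith
    nlinarith

/-- Linear lower bound for the exponent, with `K = a ^ 3`. -/
lemma exponent_lower {a m u t : ℝ} (ha : 0 < a) (hm : 0 < m) (hm1 : m ≤ 1) (hma : m ≤ a ^ 2)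
    (hu : |u| ≤ π / 2) (ht : 0 ≤ t) :
    m / 196 * (a * (1 + (a * u) ^ 2)) * t - 1
      ≤ a ^ 3 * (A (u + π / 2 + t) - A (u + π / 2)) := by
  have h := mul_le_mul_of_nonneg_left (A_sub_lower hu ht) (by positivity : 0 ≤ a ^ 3)
  have key : m * (a * t - 1) ≤ a ^ 3 * (t * min 1 (t ^ 2)) := by
    rcases le_total 1 (t ^ 2) with h1 | h1
    · rw [min_eq_left h1]
      have : m * (a * t) ≤ a ^ 2 * (a * t) := by gcongr
      nlinarith
    · rw [min_eq_right h1]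
      have hx : 0 ≤ a * t := by positivity
      have h3 : a ^ 3 * (t * t ^ 2) = (a * t) ^ 3 := by ring
      rw [h3]
      rcases le_total (a * t) 1 with h2 | h2
      · have : 0 ≤ (a * t) ^ 3 := by positivity
        nlinarith
      · have : a * t ≤ (a * t) ^ 3 := le_self_pow₀ h2 (by norm_num)
        nlinarith
  have h2 : m * (a ^ 3 * (t * u ^ 2)) ≤ a ^ 3 * (t * u ^ 2) :=
    mul_le_of_le_one_left (by positivity) hm1
  nlinarith

lemma inner_le {a m β : ℝ} (ha : 0 < a) (hm : 0 < m) (hm1 : m ≤ 1) (hma : m ≤ a ^ 2)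
    (hβ : |β - π / 2| ≤ π / 2) :
    ∫ z in Set.Ici β, Real.exp (-a ^ 3 * (A z - A β))
      ≤ Real.exp 1 * 196 / (m * a) * (1 + (a * β - a * (π / 2)) ^ 2)⁻¹ := by
  set l := m / 196 * (a * (1 + (a * (β - π / 2)) ^ 2)) with hl
  have hlpos : 0 < l := by positivity
  have hle : ∀ z ∈ Set.Ici β, Real.exp (-a ^ 3 * (A z - A β))
      ≤ Real.exp (1 + l * β) * Real.exp (-l * z) := by
    intro z hz
    have h := exponent_lower ha hm hm1 hma hβ (sub_nonneg.2 hz)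
    rw [← hl, sub_add_cancel, add_sub_cancel] at h
    rw [← Real.exp_add]
    apply Real.exp_le_exp.2
    linarith
  have hint : IntegrableOn (fun z => Real.exp (1 + l * β) * Real.exp (-l * z)) (Set.Ici β) := by
    rw [integrableOn_Ici_iff_integrableOn_Ioi]
    exact (integrableOn_exp_mul_Ioi (by linarith) β).const_mul _
  calc _ ≤ ∫ z in Set.Ici β, Real.exp (1 + l * β) * Real.exp (-l * z) := by
        apply integral_mono_of_nonneg (Filter.Eventually.of_forall fun z => (Real.exp_pos _).le)
          hint
        exact (ae_restrict_iff' measurableSet_Ici).2 (Filter.Eventually.of_forall hle)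
    _ = Real.exp 1 / l := by
        rw [integral_Ici_eq_integral_Ioi, integral_const_mul,
          integral_exp_mul_Ioi (by linarith) β, neg_div_neg_eq, ← mul_div_assoc, ← Real.exp_add]
        ring_nf
    _ = _ := by
        have : a * β - a * (π / 2) = a * (β - π / 2) := by ring
        rw [this, hl]
        field_simp

/-- for each `k₀ > 0` there is `C > 0` such that for all `K ≥ k₀`,
`∫₀^π ∫_β^∞ e^{-K(A(z) - A(β))} dz dβ ≤ C K^{-2/3}`. -/
theorem stmt2 (k₀ : ℝ) (hk₀ : 0 < k₀) :
    ∃ C : ℝ, 0 < C ∧ ∀ K : ℝ, k₀ ≤ K →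
      (∫ β in (0:ℝ)..π, ∫ z in Set.Ici β, Real.exp (-K * (A z - A β)))
        ≤ C * K ^ (-(2:ℝ)/3) := by
  have ha₀ : 0 < k₀ ^ ((1:ℝ)/3) := by positivity
  set m := min 1 ((k₀ ^ ((1:ℝ)/3)) ^ 2) with hm
  have hmpos : 0 < m := lt_min one_pos (by positivity)
  refine ⟨Real.exp 1 * 196 / m * π, by positivity, fun K hK => ?_⟩
  have hK0 : 0 < K := hk₀.trans_le hK
  obtain ⟨a, hadef⟩ : ∃ a, a = K ^ ((1:ℝ)/3) := ⟨_, rfl⟩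
  have ha : 0 < a := by rw [hadef]; positivity
  have ha3 : a ^ 3 = K := by
    rw [hadef, ← Real.rpow_natCast, ← Real.rpow_mul hK0.le]; norm_num
  have ha2 : K ^ (-(2:ℝ)/3) = a⁻¹ * a⁻¹ := by
    rw [hadef, ← Real.rpow_neg hK0.le, ← Real.rpow_add hK0]; norm_num
  have hma : m ≤ a ^ 2 := by
    refine (min_le_right _ _).trans ?_
    rw [hadef]
    gcongr
  rw [ha2, ← ha3]
  have hcont : Continuous fun β : ℝ =>
      Real.exp 1 * 196 / (m * a) * (1 + (a * β - a * (π / 2)) ^ 2)⁻¹ := by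
    refine continuous_const.mul (Continuous.inv₀ (by fun_prop) fun β => ?_)
    positivity
  calc _ ≤ ∫ β in (0:ℝ)..π,
        Real.exp 1 * 196 / (m * a) * (1 + (a * β - a * (π / 2)) ^ 2)⁻¹ := by
        rw [intervalIntegral.integral_of_le Real.pi_pos.le,
          intervalIntegral.integral_of_le Real.pi_pos.le]
        -- Only the majorant has to be integrable.
        apply integral_mono_of_nonneg
        · exact Filter.Eventually.of_forall fun β => integral_nonneg fun z => (Real.exp_pos _).le
        · exact (hcont.intervalIntegrable 0 π).1
        · refine (ae_restrict_iff' measurableSet_Ioc).2 (Filter.Eventually.of_forall fun β hβ => ?_)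
          apply inner_le ha hmpos (min_le_left _ _) hma
          rw [abs_le]
          constructor <;> linarith [hβ.1, hβ.2]
    _ = Real.exp 1 * 196 / (m * a) * (a⁻¹ * (Real.arctan (a * π - a * (π / 2))
          - Real.arctan (a * 0 - a * (π / 2)))) := by
        rw [intervalIntegral.integral_const_mul,
          intervalIntegral.integral_comp_mul_sub (fun x => (1 + x ^ 2)⁻¹) ha.ne',
          integral_inv_one_add_sq, smul_eq_mul]
    _ ≤ Real.exp 1 * 196 / (m * a) * (a⁻¹ * π) := by
        gcongr
        linarith [Real.arctan_lt_pi_div_two (a * π - a * (π / 2)),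
          Real.neg_pi_div_two_lt_arctan (a * 0 - a * (π / 2))]
    _ = _ := by
        field_simp
end

section
/- Define A(φ) := φ/2 + sin(2φ)/4. There exists a constant C > 0 such that for every x ≥ 0 the two-dimensional Lebesgue measure of the set {(β, z) ∈ ℝ² : 0 ≤ β ≤ π, β ≤ z ≤ β + 1, A(z) − A(β) ≤ x} is at most C·x^{2/3}. -/
/-!
Write `t = z - β`, `d = β - π/2` and `s = x ^ (1/3)`. The increment of `A` has the closed form
`(t - sin t) / 2 + sin t * cos (β + t/2) ^ 2`. On the strip the first term is at least a multiple
of `t ^ 3`, and since `|sin u| ≥ |u| / 4` for `u = d + t/2` (which stays away from `π`) the second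
is at least a multiple of `t * (d + t/2) ^ 2`. Together they dominate `t * (t ^ 2 + d ^ 2)`
(`increment_lower_bound`).

On the set this gives `t ≤ 4 s` and `t * d ^ 2 ≤ 64 s ^ 3`, which merge into the single bound
`t ≤ 68 s / (1 + (d / s) ^ 2)` (`section_bound`). The right-hand side is a Cauchy profile in `β`
of total mass `68 π s ^ 2 = 68 π x ^ (2/3)`, so integrating the lengths of the vertical sections
proves the claim with `C = 68 π`.
-/

open Real Set MeasureTheory

lemma A_increment (β t : ℝ) :
    A (β + t) - A β = (t - sin t) / 2 + sin t * sin (β - π / 2 + t / 2) ^ 2 := by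
  have h1 : sin (β - π / 2 + t / 2) = -cos (β + t / 2) := by
    rw [← Real.sin_sub_pi_div_two]; congr 1; ring
  have h2 : sin (2 * (β + t)) - sin (2 * β) = 2 * sin t * cos (2 * (β + t / 2)) := by
    rw [Real.sin_sub_sin]; congr 3 <;> ring
  rw [Real.cos_two_mul] at h2
  rw [h1]; unfold A
  linear_combination h2 / 4

/-- Jordan's inequality `2 / π * u ≤ sin u`, prolonged past `π/2` by reflection at the price of a
smaller constant. -/
lemma quarter_le_sin {u : ℝ} (h0 : 0 ≤ u) (h1 : u ≤ π / 2 + 1 / 2) : u / 4 ≤ sin u := by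
  have hpi := Real.pi_gt_three
  have hpi4 := Real.pi_le_four
  have hc : 1 / 2 ≤ 2 / π := by rw [div_le_div_iff₀] <;> linarith
  rcases le_total u (π / 2) with h | h
  · have := Real.mul_le_sin h0 h
    nlinarith
  · have := Real.mul_le_sin (x := π - u) (by linarith) (by linarith)
    rw [Real.sin_pi_sub] at this
    have hd : π < 3.15 := Real.pi_lt_d2
    have hc' : 3 / 5 ≤ 2 / π := by rw [div_le_div_iff₀] <;> linarith
    nlinarith

lemma sq_le_sin_sq {u : ℝ} (h0 : -(π / 2) ≤ u) (h1 : u ≤ π / 2 + 1 / 2) :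
    u ^ 2 / 16 ≤ sin u ^ 2 := by
  rcases le_total 0 u with h | h
  · have := quarter_le_sin h h1
    nlinarith
  · have := quarter_le_sin (u := -u) (by linarith) (by linarith)
    rw [Real.sin_neg] at this
    nlinarith

/-- The increment of `A` over `[β, β + t]` is at least of order `t * max t |β - π/2| ^ 2`, because
`cos ^ 2` vanishes only to second order at `π/2`. -/
lemma increment_lower_bound {β t : ℝ} (hβ0 : 0 ≤ β) (hβ1 : β ≤ π) (ht0 : 0 ≤ t) (ht1 : t ≤ 1) :
    t * (t ^ 2 + (β - π / 2) ^ 2) ≤ 64 * (A (β + t) - A β) := by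
  rw [A_increment]
  have hb := abs_le.1 (Real.sin_bound (x := t) (by rw [abs_of_nonneg ht0]; exact ht1))
  rw [abs_of_nonneg ht0] at hb
  have h5 : t ^ 5 ≤ t ^ 3 := pow_le_pow_of_le_one ht0 ht1 (by norm_num)
  have h3 : t ^ 3 ≤ t := pow_le_of_le_one ht0 ht1 (by norm_num)
  have h3' : 0 ≤ t ^ 3 := by positivity
  have hs1 : t ^ 3 / 10 ≤ t - sin t := by linarith [hb.2]
  have hs2 : t / 2 ≤ sin t := by linarith [hb.1]
  have hu := sq_le_sin_sq (u := β - π / 2 + t / 2) (by linarith) (by linarith)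
  have hs0 : 0 ≤ sin t := by linarith
  have hm : t / 2 * ((β - π / 2 + t / 2) ^ 2 / 16)
      ≤ sin t * sin (β - π / 2 + t / 2) ^ 2 := by gcongr
  -- Twice `t * (d + t/2) ^ 2` minus `t * d ^ 2` is this square up to a multiple of `t ^ 3`.
  have hq : 0 ≤ t * (β - π / 2 + t) ^ 2 := by positivity
  nlinarith

/-- The vertical section of the set (with `x = s ^ 3`) over `β` has length at most a Cauchy profile
of height `68 s` and width `s` centred at `π/2`. For `s = 0` the division is junk but the right-hand
side is `β`, which is still correct. -/
lemma section_bound {β z s : ℝ} (hs : 0 ≤ s) (hβ0 : 0 ≤ β) (hβ1 : β ≤ π) (hz0 : β ≤ z)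
    (hz1 : z ≤ β + 1) (hA : A z - A β ≤ s ^ 3) :
    z ≤ β + 68 * s * (1 + ((β - π / 2) / s) ^ 2)⁻¹ := by
  obtain ⟨t, rfl⟩ : ∃ t, z = β + t := ⟨z - β, by ring⟩
  have ht0 : 0 ≤ t := by linarith
  have h := increment_lower_bound hβ0 hβ1 ht0 (by linarith)
  have hd : 0 ≤ t * (β - π / 2) ^ 2 := by positivity
  have ht : t ≤ 4 * s := by
    refine le_of_pow_le_pow_left₀ (n := 3) (by norm_num) (by positivity) ?_
    nlinarith
  rcases hs.eq_or_lt with rfl | hs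
  · simpa using ht
  · have : 68 * s * (1 + ((β - π / 2) / s) ^ 2)⁻¹ = 68 * s ^ 3 / (s ^ 2 + (β - π / 2) ^ 2) := by
      field_simp
    rw [this, add_le_add_iff_left, le_div_iff₀ (by positivity)]
    have : t * s ^ 2 ≤ 4 * s * s ^ 2 := by gcongr
    have : 0 ≤ t ^ 3 := by positivity
    nlinarith

lemma lintegral_cauchy_profile {s : ℝ} (hs : 0 ≤ s) :
    ∫⁻ β : ℝ, ENNReal.ofReal (68 * s * (1 + ((β - π / 2) / s) ^ 2)⁻¹)
      = ENNReal.ofReal (68 * π * s ^ 2) := by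
  rcases hs.eq_or_lt with rfl | hs
  · simp
  · have hi : Integrable (fun β : ℝ => (1 + ((β - π / 2) / s) ^ 2)⁻¹) :=
      (integrable_inv_one_add_sq.comp_div hs.ne').comp_sub_right (π / 2)
    rw [← ofReal_integral_eq_lintegral_ofReal (hi.const_mul _)
      (Filter.Eventually.of_forall fun β => by positivity), integral_const_mul,
      integral_sub_right_eq_self (fun β : ℝ => (1 + (β / s) ^ 2)⁻¹) (π / 2),
      Measure.integral_comp_div (fun β : ℝ => (1 + β ^ 2)⁻¹) s, integral_univ_inv_one_add_sq,
      abs_of_pos hs, smul_eq_mul]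
    congr 1; ring

/-- there is `C > 0` such that for all `x ≥ 0`, the planar Lebesgue measure of
`{(β, z) : 0 ≤ β ≤ π, β ≤ z ≤ β + 1, A(z) - A(β) ≤ x}` is at most `C x^{2/3}`. -/
theorem stmt3 :
    ∃ C : ℝ, 0 < C ∧ ∀ x : ℝ, 0 ≤ x →
      volume {p : ℝ × ℝ | 0 ≤ p.1 ∧ p.1 ≤ π ∧ p.1 ≤ p.2 ∧ p.2 ≤ p.1 + 1 ∧ A p.2 - A p.1 ≤ x}
        ≤ ENNReal.ofReal (C * x ^ ((2:ℝ)/3)) := by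
  refine ⟨68 * π, by positivity, fun x hx => ?_⟩
  obtain ⟨s, hs, hs3, hs2⟩ : ∃ s : ℝ, 0 ≤ s ∧ x = s ^ 3 ∧ x ^ ((2:ℝ)/3) = s ^ 2 := by
    refine ⟨x ^ ((1:ℝ)/3), by positivity, ?_, ?_⟩
    · rw [← Real.rpow_mul_natCast hx]; norm_num
    · rw [← Real.rpow_mul_natCast hx]; norm_num
  have hcont : Continuous A := by unfold A; fun_prop
  have hmeas : MeasurableSet
      {p : ℝ × ℝ | 0 ≤ p.1 ∧ p.1 ≤ π ∧ p.1 ≤ p.2 ∧ p.2 ≤ p.1 + 1 ∧ A p.2 - A p.1 ≤ x} := by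
    refine IsClosed.measurableSet ?_
    refine (isClosed_le (by fun_prop) (by fun_prop)).and ?_
    refine (isClosed_le (by fun_prop) (by fun_prop)).and ?_
    refine (isClosed_le (by fun_prop) (by fun_prop)).and ?_
    exact (isClosed_le (by fun_prop) (by fun_prop)).and
      (isClosed_le (by fun_prop) (by fun_prop))
  rw [hs2, ← lintegral_cauchy_profile hs, Measure.volume_eq_prod, Measure.prod_apply hmeas]
  refine lintegral_mono fun β => ?_
  calc _ ≤ volume (Icc β (β + 68 * s * (1 + ((β - π / 2) / s) ^ 2)⁻¹)) := by
        refine measure_mono ?_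
        rintro z ⟨h0, h1, h2, h3, h4⟩
        exact ⟨h2, section_bound hs h0 h1 h2 h3 (hs3 ▸ h4)⟩
    _ = _ := by rw [Real.volume_Icc, add_sub_cancel_left]
end

section
/- Define A(φ) := φ/2 + sin(2φ)/4. Fix K > 0, σ > 0 and 0 ≤ a < π/2, and for φ ≥ a set f(φ) := ∫_a^φ e^{K·A(β)} dβ and g(φ) := (2/σ²)·∫_a^φ ∫_a^β e^{K(A(β) − A(z))} dz dβ. Then for every φ > a: lim_{b → ∞} [ (g(b)/f(b))·f(φ) − g(φ) ] = (2/σ²)·∫_a^φ ∫_β^∞ e^{−K(A(z) − A(β))} dz dβ. -/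
open Real Set MeasureTheory Filter

/-- `f(φ) = ∫_a^φ e^{K A(β)} dβ`. -/
noncomputable def fFun (K a φ : ℝ) : ℝ := ∫ β in a..φ, Real.exp (K * A β)

/-- `g(φ) = (2/σ²) ∫_a^φ ∫_a^β e^{K (A(β) - A(z))} dz dβ`. -/
noncomputable def gFun (K σ a φ : ℝ) : ℝ :=
  (2 / σ ^ 2) * ∫ β in a..φ, ∫ z in a..β, Real.exp (K * (A β - A z))

lemma A_continuous : Continuous A := by
  unfold A
  fun_prop

lemma A_lower (x : ℝ) : x / 2 - 1 / 4 ≤ A x := by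
  unfold A
  linarith [Real.neg_one_le_sin (2 * x)]

/-- Cesàro's theorem for integrals: weighted averages of a convergent function converge to the
same limit as soon as the total weight tends to infinity. -/
lemma tendsto_weighted_average {w h : ℝ → ℝ} {a L : ℝ} (hw : Continuous w) (hh : Continuous h)
    (hw0 : ∀ x, 0 < w x) (hW : Tendsto (fun b => ∫ x in a..b, w x) atTop atTop)
    (hL : Tendsto h atTop (nhds L)) :
    Tendsto (fun b => (∫ x in a..b, w x * h x) / ∫ x in a..b, w x) atTop (nhds L) := by
  have hint (p q : ℝ) : IntervalIntegrable w volume p q := hw.intervalIntegrable p q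
  have hc : Continuous fun x => w x * (h x - L) := by fun_prop
  rw [Metric.tendsto_atTop'] at hL ⊢
  intro ε hε
  obtain ⟨c₀, hc₀⟩ := hL (ε / 2) (half_pos hε)
  set c := max a (c₀ + 1) with hcdef
  set C := |∫ x in a..c, w x * (h x - L)| with hC
  -- Past `B` the total weight exceeds `2 * C / ε`, so the contribution `C` of `[a, c]` to the
  -- averaged error is below `ε / 2`; on `[c, b]` the error is pointwise below `ε / 2`.
  obtain ⟨B, hB⟩ := (tendsto_atTop.1 hW (2 * C / ε + 1)).exists_forall_of_atTop
  refine ⟨max B c, fun b hb => ?_⟩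
  have hBb := hB b ((le_max_left _ _).trans hb.le)
  have hcb : c ≤ b := (le_max_right _ _).trans hb.le
  set W := ∫ x in a..b, w x with hWdef
  have hWpos : 0 < W := by
    have : 0 ≤ 2 * C / ε := by positivity
    linarith
  have hsplit : (∫ x in a..b, w x * h x) - L * W = ∫ x in a..b, w x * (h x - L) := by
    rw [hWdef, ← intervalIntegral.integral_const_mul, ← intervalIntegral.integral_sub]
    · congr 1; ext x; ring
    · exact (hw.mul hh).intervalIntegrable _ _
    · exact (hint a b).const_mul L
  have htail : |∫ x in c..b, w x * (h x - L)| ≤ ε / 2 * W := by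
    have h1 : |∫ x in c..b, w x * (h x - L)| ≤ ∫ x in c..b, ε / 2 * w x := by
      refine intervalIntegral.norm_integral_le_of_norm_le (f := fun x => w x * (h x - L)) hcb
        (ae_of_all _ fun x hx => ?_) ((hint c b).const_mul _)
      have hd := hc₀ x (by have := le_max_right a (c₀ + 1); linarith [hx.1])
      rw [Real.dist_eq] at hd
      rw [Real.norm_eq_abs, abs_mul, abs_of_pos (hw0 x), mul_comm]
      exact mul_le_mul_of_nonneg_right hd.le (hw0 x).le
    have h2 : 0 ≤ ∫ x in a..c, w x :=
      intervalIntegral.integral_nonneg (le_max_left _ _) fun x _ => (hw0 x).le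
    have h3 := intervalIntegral.integral_add_adjacent_intervals (hint a c) (hint c b)
    rw [intervalIntegral.integral_const_mul] at h1
    refine h1.trans (mul_le_mul_of_nonneg_left ?_ (half_pos hε).le)
    linarith
  have hall : |∫ x in a..b, w x * (h x - L)| ≤ C + ε / 2 * W := by
    rw [← intervalIntegral.integral_add_adjacent_intervals (hc.intervalIntegrable a c)
      (hc.intervalIntegrable c b)]
    exact (abs_add_le _ _).trans (add_le_add le_rfl htail)
  rw [Real.dist_eq, div_sub' hWpos.ne', abs_div, abs_of_pos hWpos, div_lt_iff₀ hWpos,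
    mul_comm W L, hsplit]
  have hCW : C < ε / 2 * W := by
    have h4 : 2 * C / ε < W := by linarith
    rw [div_lt_iff₀ hε] at h4
    linarith
  linarith

lemma integrableOn_exp_neg_A {K : ℝ} (hK : 0 < K) (c : ℝ) :
    IntegrableOn (fun z => Real.exp (-K * A z)) (Ioi c) := by
  have hA := A_continuous
  have hdom := (integrableOn_exp_mul_Ioi (a := -K / 2) (by linarith) c).const_mul
    (Real.exp (K / 4))
  refine Integrable.mono' hdom
    (Continuous.aestronglyMeasurable (by fun_prop)) (ae_of_all _ fun z => ?_)
  rw [Real.norm_eq_abs, abs_of_pos (Real.exp_pos _), ← Real.exp_add]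
  apply Real.exp_le_exp.2
  nlinarith [A_lower z]

lemma tendsto_fFun {K a : ℝ} (hK : 0 < K) (ha : 0 ≤ a) :
    Tendsto (fun b => ∫ β in a..b, Real.exp (K * A β)) atTop atTop := by
  have hA := A_continuous
  have hlin : Tendsto (fun b : ℝ => (b - a) * Real.exp (-K / 4)) atTop atTop :=
    (tendsto_atTop_add_const_right _ (-a) tendsto_id).atTop_mul_const (Real.exp_pos _)
  refine tendsto_atTop_mono' _ ?_ hlin
  filter_upwards [eventually_ge_atTop a] with b hb
  rw [← smul_eq_mul, ← intervalIntegral.integral_const]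
  refine intervalIntegral.integral_mono_on hb (by simp)
    (Continuous.intervalIntegrable (by fun_prop) _ _) fun x hx => ?_
  apply Real.exp_le_exp.2
  nlinarith [A_lower x, mul_nonneg hK.le (ha.trans hx.1)]

/-- for `K > 0`, `σ > 0`, `0 ≤ a < π/2` and `φ > a`,
`lim_{b → ∞} [(g(b)/f(b)) f(φ) - g(φ)] = (2/σ²) ∫_a^φ ∫_β^∞ e^{-K(A(z)-A(β))} dz dβ`. -/
theorem stmt6 (K σ a : ℝ) (hK : 0 < K) (hσ : 0 < σ) (ha : 0 ≤ a) (ha' : a < π / 2)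
    (φ : ℝ) (hφ : a < φ) :
    Tendsto (fun b : ℝ => (gFun K σ a b / fFun K a b) * fFun K a φ - gFun K σ a φ)
      atTop
      (nhds ((2 / σ ^ 2) * ∫ β in a..φ, ∫ z in Set.Ici β, Real.exp (-K * (A z - A β)))) := by
  have hA := A_continuous
  set E : ℝ → ℝ := fun β => Real.exp (K * A β) with hE
  set e : ℝ → ℝ := fun z => Real.exp (-K * A z) with he
  set G : ℝ → ℝ := fun β => ∫ z in a..β, e z with hG
  set L : ℝ := ∫ z in Ioi a, e z with hL
  have hEc : Continuous E := by fun_prop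
  have hec : Continuous e := by fun_prop
  have hGc : Continuous G :=
    intervalIntegral.continuous_primitive (fun p q => hec.intervalIntegrable p q) a
  have hGL : Tendsto G atTop (nhds L) :=
    intervalIntegral_tendsto_integral_Ioi a (integrableOn_exp_neg_A hK a) tendsto_id
  have hg (b : ℝ) : gFun K σ a b = (2 / σ ^ 2) * ∫ β in a..b, E β * G β := by
    unfold gFun
    congr 2
    ext β
    rw [hG, ← intervalIntegral.integral_const_mul]
    congr 1
    ext z
    simp only [hE, he, ← Real.exp_add]
    ring_nf
  have htail (β : ℝ) : ∫ z in Ici β, Real.exp (-K * (A z - A β)) = E β * (L - G β) := by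
    have h1 : L - G β = ∫ z in Ioi β, e z := by
      rw [← intervalIntegral.integral_interval_add_Ioi (f := e) (b := β)
        (integrableOn_exp_neg_A hK a) (integrableOn_exp_neg_A hK β)] at hL
      rw [hL, hG]
      ring
    rw [h1, integral_Ici_eq_integral_Ioi, ← integral_const_mul]
    congr 1
    ext z
    simp only [hE, he, ← Real.exp_add]
    ring_nf
  have hlim : (2 / σ ^ 2) * ∫ β in a..φ, ∫ z in Set.Ici β, Real.exp (-K * (A z - A β))
      = (2 / σ ^ 2) * L * fFun K a φ - gFun K σ a φ := by
    have h2 : ∫ β in a..φ, E β * (L - G β)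
        = L * (∫ β in a..φ, E β) - ∫ β in a..φ, E β * G β := by
      rw [← intervalIntegral.integral_const_mul, ← intervalIntegral.integral_sub]
      · congr 1; ext x; ring
      · exact (hEc.const_mul L).intervalIntegrable _ _
      · exact (hEc.mul hGc).intervalIntegrable _ _
    simp only [htail]
    rw [h2, hg, fFun]
    ring
  rw [hlim]
  have havg := tendsto_weighted_average hEc hGc (fun x => Real.exp_pos _) (tendsto_fFun hK ha) hGL
  refine (((havg.const_mul (2 / σ ^ 2)).mul_const (fFun K a φ)).sub_const _).congr fun b => ?_
  rw [hg b, fFun, fFun, mul_div_assoc]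
end

section
/- Let γ > 0, R ≥ 1, T > 0, ψ ∈ ℝ, let h : [0, T] → ℝ be continuous with h(0) = 0, and let r : [0, T] → ℝ satisfy r(t) ≥ R for all t. Suppose φ, φ̃ : [0, T] → ℝ are continuous and satisfy, for all t ∈ [0, T], φ(t) = ψ − ∫₀^t r(s)^γ·cos²(φ(s)) ds + h(t) and φ̃(t) = ψ − R^γ·∫₀^t cos²(φ̃(s)) ds + h(t) (where s ↦ r(s)^γ·cos²(φ(s)) is integrable on [0, T]). Then φ(t) ≤ φ̃(t) for all t ∈ [0, T]. -/
open Real Set MeasureTheory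

/-!
Write `D = φ - φt`. The noise path cancels in `D`, and since `r ≥ R` the increments of `D` are
bounded above by `R ^ γ * ∫ (cos² φt - cos² φ)`; no continuity of `r` is needed for this. Hence the
upper right derivative of `D` is at most `R ^ γ * (cos² φt - cos² φ) ≤ R ^ γ * |D|`, as `cos²` is
1-Lipschitz (`cos_sq_sub_cos_sq_le`). Since `D 0 = 0`, the function `D` can never cross the barrier
`ε * exp ((R ^ γ + 1) * t)`, which is positive and grows strictly faster than `D` at any contact
point. Letting `ε → 0` gives `D ≤ 0`.
-/

theorem cos_sq_sub_cos_sq_le (a b : ℝ) : cos a ^ 2 - cos b ^ 2 ≤ |b - a| := by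
  have h1 : cos a ^ 2 - cos b ^ 2 = sin (b + a) * sin (b - a) := by
    rw [sin_add, sin_sub]
    nlinarith [sin_sq_add_cos_sq a, sin_sq_add_cos_sq b]
  rw [h1]
  calc sin (b + a) * sin (b - a) ≤ |sin (b + a)| * |sin (b - a)| := by
        rw [← abs_mul]; exact le_abs_self _
    _ ≤ 1 * |b - a| := by
        exact mul_le_mul (abs_sin_le_one _) abs_sin_le_abs (abs_nonneg _) zero_le_one
    _ = |b - a| := one_mul _

/-- pathwise comparison of the true angular process with the frozen-radius
auxiliary angular process driven by the same path `h`. -/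
theorem stmt7 (γ R T ψ : ℝ) (hγ : 0 < γ) (hR : 1 ≤ R) (hT : 0 < T)
    (h r φ φt : ℝ → ℝ)
    (hh : ContinuousOn h (Set.Icc 0 T)) (hh0 : h 0 = 0)
    (hr : ∀ t ∈ Set.Icc (0:ℝ) T, R ≤ r t)
    (hφc : ContinuousOn φ (Set.Icc 0 T)) (hφtc : ContinuousOn φt (Set.Icc 0 T))
    (hint : IntegrableOn (fun s => r s ^ γ * (Real.cos (φ s)) ^ 2) (Set.Icc 0 T))
    (heq : ∀ t ∈ Set.Icc (0:ℝ) T,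
      φ t = ψ - (∫ s in (0:ℝ)..t, r s ^ γ * (Real.cos (φ s)) ^ 2) + h t)
    (heqt : ∀ t ∈ Set.Icc (0:ℝ) T,
      φt t = ψ - R ^ γ * (∫ s in (0:ℝ)..t, (Real.cos (φt s)) ^ 2) + h t) :
    ∀ t ∈ Set.Icc (0:ℝ) T, φ t ≤ φt t := by
  have hK : 0 < R ^ γ := rpow_pos_of_pos (by linarith) _
  set K := R ^ γ with hKdef
  set f : ℝ → ℝ := fun s => K * (cos (φt s) ^ 2 - cos (φ s) ^ 2) with hf
  have hcos : ContinuousOn (fun s => cos (φ s) ^ 2) (Icc 0 T) :=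
    (continuous_cos.comp_continuousOn hφc).pow 2
  have hcost : ContinuousOn (fun s => cos (φt s) ^ 2) (Icc 0 T) :=
    (continuous_cos.comp_continuousOn hφtc).pow 2
  have hfc : ContinuousOn f (Icc 0 T) := continuousOn_const.mul (hcost.sub hcos)
  have hsub : ∀ x z, 0 ≤ x → x ≤ z → z ≤ T → uIcc x z ⊆ Icc 0 T := fun x z hx hxz hz => by
    rw [uIcc_of_le hxz]; exact Icc_subset_Icc hx hz
  have hintI : ∀ x z, 0 ≤ x → x ≤ z → z ≤ T →
      IntervalIntegrable (fun s => r s ^ γ * cos (φ s) ^ 2) volume x z := fun x z hx hxz hz =>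
    (hint.mono_set (hsub x z hx hxz hz)).intervalIntegrable
  have hcostI : ∀ x z, 0 ≤ x → x ≤ z → z ≤ T →
      IntervalIntegrable (fun s => cos (φt s) ^ 2) volume x z := fun x z hx hxz hz =>
    (hcost.mono (hsub x z hx hxz hz)).intervalIntegrable
  have hfI : ∀ x z, 0 ≤ x → x ≤ z → z ≤ T → IntervalIntegrable f volume x z :=
    fun x z hx hxz hz => (hfc.mono (hsub x z hx hxz hz)).intervalIntegrable
  have hincr : ∀ x z, 0 ≤ x → x ≤ z → z ≤ T →
      (φ z - φt z) - (φ x - φt x) ≤ ∫ s in x..z, f s := by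
    intro x z hx hxz hz
    have h0z := hx.trans hxz
    have hxT := hxz.trans hz
    rw [heq z ⟨h0z, hz⟩, heqt z ⟨h0z, hz⟩, heq x ⟨hx, hxT⟩, heqt x ⟨hx, hxT⟩]
    have e1 := intervalIntegral.integral_interval_sub_left
      (hintI 0 z le_rfl h0z hz) (hintI 0 x le_rfl hx hxT)
    have e2 := intervalIntegral.integral_interval_sub_left
      (hcostI 0 z le_rfl h0z hz) (hcostI 0 x le_rfl hx hxT)
    have e3 : (∫ s in x..z, (K * cos (φt s) ^ 2 - r s ^ γ * cos (φ s) ^ 2))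
        = K * (∫ s in x..z, cos (φt s) ^ 2) - ∫ s in x..z, r s ^ γ * cos (φ s) ^ 2 := by
      rw [intervalIntegral.integral_sub ((hcostI x z hx hxz hz).const_mul K)
        (hintI x z hx hxz hz), intervalIntegral.integral_const_mul]
    have e4 : (∫ s in x..z, (K * cos (φt s) ^ 2 - r s ^ γ * cos (φ s) ^ 2))
        ≤ ∫ s in x..z, f s := by
      refine intervalIntegral.integral_mono_on hxz
        (((hcostI x z hx hxz hz).const_mul K).sub (hintI x z hx hxz hz)) (hfI x z hx hxz hz) ?_
      intro s hs
      have hrs : K ≤ r s ^ γ :=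
        rpow_le_rpow (by linarith) (hr s ⟨hx.trans hs.1, hs.2.trans hz⟩) hγ.le
      have := mul_le_mul_of_nonneg_right hrs (sq_nonneg (cos (φ s)))
      simp only [hf]
      linarith
    rw [e3, ← e1, ← e2] at e4
    linarith
  have hbarrier : ∀ ε > 0, ∀ t ∈ Icc (0:ℝ) T, φ t - φt t ≤ ε * exp ((K + 1) * t) := by
    intro ε hε
    have hB : ∀ x, HasDerivAt (fun t => ε * exp ((K + 1) * t))
        ((K + 1) * (ε * exp ((K + 1) * x))) x := by
      intro x
      exact ((((hasDerivAt_id' x).const_mul (K + 1)).exp).const_mul ε).congr_deriv (by ring)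
    refine image_le_of_liminf_slope_right_lt_deriv_boundary (f := fun t => φ t - φt t) (f' := f)
      (hφc.sub hφtc) ?_ ?_ hB ?_
    -- The right slope of `φ - φt` at `x` is at most that of `u ↦ ∫ s in x..u, f s`,
    -- which has right derivative `f x`.
    · intro x hx q hq
      have hTx : Icc 0 T ∈ nhdsWithin x (Ioi x) :=
        Filter.mem_of_superset (Ioo_mem_nhdsGT hx.2)
          fun y hy => ⟨hx.1.trans hy.1.le, hy.2.le⟩
      have hcw : ContinuousWithinAt f (Ioi x) x :=
        (hfc x ⟨hx.1, hx.2.le⟩).mono_of_mem_nhdsWithin hTx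
      have hd : HasDerivWithinAt (fun u => ∫ s in x..u, f s) (f x) (Ioi x) x :=
        (intervalIntegral.integral_hasDerivWithinAt_right (s := Ici x) (t := Ioi x)
          IntervalIntegrable.refl
          ⟨Icc 0 T, hTx, hfc.aestronglyMeasurable measurableSet_Icc⟩ hcw).mono Ioi_subset_Ici_self
      have hs := (hasDerivWithinAt_iff_tendsto_slope' (lt_irrefl x)).1 hd
      refine Filter.Eventually.frequently ?_
      filter_upwards [hs.eventually (gt_mem_nhds hq), Ioo_mem_nhdsGT hx.2] with z hz hzI
      refine lt_of_le_of_lt ?_ hz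
      rw [slope_def_field, slope_def_field, intervalIntegral.integral_same, sub_zero]
      have := hincr x z hx.1 hzI.1.le hzI.2.le
      have hpos : 0 < z - x := sub_pos.2 hzI.1
      gcongr
    · have h1 := heq 0 ⟨le_rfl, hT.le⟩
      have h2 := heqt 0 ⟨le_rfl, hT.le⟩
      rw [intervalIntegral.integral_same] at h1 h2
      have : φ 0 - φt 0 = 0 := by rw [h1, h2]; ring
      simp only [this]
      positivity
    -- At a contact point `φ x - φt x` equals the positive barrier value `b`, so `f x ≤ K * b`,
    -- which is less than the barrier's slope `(K + 1) * b`.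
    · intro x hx hxB
      have hBpos : 0 < ε * exp ((K + 1) * x) := by positivity
      have h1 := mul_le_mul_of_nonneg_left (cos_sq_sub_cos_sq_le (φt x) (φ x)) hK.le
      rw [hxB, abs_of_pos hBpos] at h1
      simp only [hf]
      linarith
  intro t ht
  refine sub_nonpos.1 (le_of_forall_pos_le_add fun δ hδ => ?_)
  have := hbarrier (δ / exp ((K + 1) * t)) (by positivity) t ht
  rw [div_mul_cancel₀ _ (exp_pos _).ne'] at this
  linarith
end

section
/- Let w > v > 1 and c̃ ∈ (0, 1]. Set R_k := 2^k, d(r, R) := (1/(v−1))·(r^{1−v} − R^{1−v}) and d_{c,w}(R, r) := (1/(c(w−1)))·(r^{1−w} − R^{1−w}). Then there exists k₀ ∈ ℕ such that for all k ≥ k₀: d(R_k, R_{k+1}) + d_{c̃/2, w}(R_{k+1}, R_{k−2}) ≤ d_{1, w}(R_k, R_{k−2}) + d(R_{k−2}, R_{k−1}). -/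
/-! Put `X = (2 ^ k) ^ (1 - v)` and `Y = (2 ^ k) ^ (1 - w)`. Each term is a constant times `X` or
`Y`, and the inequality takes the form `K * Y ≤ C * X`. The two ascents contribute
`C = (1 - 2 ^ (1 - v)) * (2 ^ (-2 * (1 - v)) - 1) / (v - 1)`, which is positive because `v > 1`.
Since `Y / X = (2 ^ k) ^ (v - w)` tends to `0` for `w > v`, the inequality holds for all large `k`,
whatever the value of `K`. -/

open Real Set

lemma two_rpow_shift (k s a : ℝ) :
    ((2:ℝ) ^ (k + s)) ^ a = (2:ℝ) ^ (s * a) * ((2:ℝ) ^ k) ^ a := by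
  rw [← rpow_mul (by norm_num), ← rpow_mul (by norm_num), ← rpow_add (by norm_num)]
  ring_nf

/-- The powers with exponent `1 - w` are negligible against those with exponent `1 - v`. -/
lemma eventually_mul_rpow_le (w v K C : ℝ) (hwv : w > v) (hC : 0 < C) :
    ∃ k₀ : ℕ, ∀ k : ℕ, k₀ ≤ k →
      K * ((2:ℝ) ^ (k:ℝ)) ^ (1 - w) ≤ C * ((2:ℝ) ^ (k:ℝ)) ^ (1 - v) := by
  have hr : (2:ℝ) ^ (v - w) < 1 := rpow_lt_one_of_one_lt_of_neg (by norm_num) (by linarith)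
  have ht := (tendsto_pow_atTop_nhds_zero_of_lt_one (by positivity) hr).const_mul K
  rw [mul_zero] at ht
  obtain ⟨k₀, hk₀⟩ := Filter.eventually_atTop.1 (ht.eventually (gt_mem_nhds hC))
  refine ⟨k₀, fun k hk => ?_⟩
  have hY : ((2:ℝ) ^ (k:ℝ)) ^ (1 - w) = ((2:ℝ) ^ (v - w)) ^ k * ((2:ℝ) ^ (k:ℝ)) ^ (1 - v) := by
    rw [← rpow_natCast ((2:ℝ) ^ (v - w)), ← rpow_mul (by norm_num), ← rpow_mul (by norm_num),
      ← rpow_mul (by norm_num), ← rpow_add (by norm_num)]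
    ring_nf
  rw [hY, ← mul_assoc]
  exact mul_le_mul_of_nonneg_right (hk₀ k hk).le (by positivity)

/-- for `w > v > 1` and `c̃ ∈ (0, 1]`, with `R_k = 2^k`,
`d(r, R) = (1/(v-1))(r^{1-v} - R^{1-v})` and `d_{c,w}(R, r) = (1/(c(w-1)))(r^{1-w} - R^{1-w})`,
for all sufficiently large `k`,
`d(R_k, R_{k+1}) + d_{c̃/2,w}(R_{k+1}, R_{k-2}) ≤ d_{1,w}(R_k, R_{k-2}) + d(R_{k-2}, R_{k-1})`. -/
theorem stmt12 (w v ct : ℝ) (hwv : w > v) (hv : 1 < v) (hct : 0 < ct) (hct1 : ct ≤ 1) :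
    ∃ k₀ : ℕ, ∀ k : ℕ, k₀ ≤ k →
      (1 / (v - 1)) * (((2:ℝ) ^ (k:ℝ)) ^ (1 - v) - ((2:ℝ) ^ ((k:ℝ) + 1)) ^ (1 - v))
        + (1 / ((ct / 2) * (w - 1)))
            * (((2:ℝ) ^ ((k:ℝ) - 2)) ^ (1 - w) - ((2:ℝ) ^ ((k:ℝ) + 1)) ^ (1 - w))
      ≤ (1 / (1 * (w - 1)))
            * (((2:ℝ) ^ ((k:ℝ) - 2)) ^ (1 - w) - ((2:ℝ) ^ (k:ℝ)) ^ (1 - w))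
        + (1 / (v - 1))
            * (((2:ℝ) ^ ((k:ℝ) - 2)) ^ (1 - v) - ((2:ℝ) ^ ((k:ℝ) - 1)) ^ (1 - v)) := by
  have h1 : (2:ℝ) ^ (1 - v) < 1 := rpow_lt_one_of_one_lt_of_neg (by norm_num) (by linarith)
  have h2 : 1 < (2:ℝ) ^ (-2 * (1 - v)) := one_lt_rpow (by norm_num) (by linarith)
  have hC : 0 < 1 / (v - 1) * ((1 - (2:ℝ) ^ (1 - v)) * ((2:ℝ) ^ (-2 * (1 - v)) - 1)) :=
    mul_pos (one_div_pos.2 (by linarith)) (mul_pos (by linarith) (by linarith))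
  obtain ⟨k₀, hk₀⟩ := eventually_mul_rpow_le w v
    (1 / ((ct / 2) * (w - 1)) * ((2:ℝ) ^ (-2 * (1 - w)) - (2:ℝ) ^ (1 * (1 - w)))
      - 1 / (1 * (w - 1)) * ((2:ℝ) ^ (-2 * (1 - w)) - 1)) _ hwv hC
  refine ⟨k₀, fun k hk => ?_⟩
  have h := hk₀ k hk
  have h3 : (2:ℝ) ^ (-1 * (1 - v)) = (2:ℝ) ^ (-2 * (1 - v)) * (2:ℝ) ^ (1 - v) := by
    rw [← rpow_add (by norm_num)]
    ring_nf
  simp only [sub_eq_add_neg (k:ℝ) _, two_rpow_shift (k:ℝ) _ _, h3]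
  rw [one_mul (1 - v)]
  linear_combination h
end
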